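/- arXiv:1701.04699 — 2 statements merged into one kernel-verified Lean document; each statement's English description precedes it below -/
import Mathlib

section
/- Rational points are equidistributed on the unit circle in the sense that for every arc A = {(cos t, sin t) : θ₁ ≤ t ≤ θ₂} with 0 < θ₂ − θ₁ ≤ 2π, lim_{H→∞} |{(p,q) ∈ A ∩ ℚ² : h(p,q) ≤ H}| / |{(p,q) ∈ S¹ ∩ ℚ² : h(p,q) ≤ H}| = (θ₂−θ₁)/(2π) = length(A)/(2π). -/
open Filter

/-- The height of a rational point `(p,q)`: the minimal positive integer `h` such that
`(hp, hq) ∈ ℤ²`. -/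
noncomputable def height (p q : ℚ) : ℕ :=
  sInf {h : ℕ | 0 < h ∧ (∃ a : ℤ, (h : ℚ) * p = a) ∧ (∃ b : ℤ, (h : ℚ) * q = b)}

/-!
A rational point of the unit circle whose first coordinate has an odd numerator is `w ^ 2 / N w` for
a Gaussian integer `w` of odd norm with coprime coordinates, unique up to sign, and its height is
`N w`. Points of height at most `H` on an arc therefore correspond to such `w` of norm at most `H`
in the sector of half the angle. The remaining points are obtained from these by a quarter turn.

Lattice points in a sector are equidistributed by comparison with its area. This survives the
passage to odd norms, because the elements of even norm are the multiples of `1 + i`, and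
multiplication by a Gaussian integer rotates and scales sectors; and it survives the passage to
coprime coordinates by Möbius inversion, the tail of the sieve being dominated by `∑ 1 / d ^ 2`.
-/

open Complex MeasureTheory Topology
open scoped ArithmeticFunction.Moebius

section Sector

variable {a b : ℝ}

/-- The half-open sector of nonzero complex numbers having an argument in `(a, b]`. -/
def sector (a b : ℝ) : Set ℂ :=
  {z | ∃ r φ : ℝ, 0 < r ∧ φ ∈ Set.Ioc a b ∧ z = r * exp (φ * I)}

/-- The part of `sector a b` lying in the closed unit disc. -/
def unitSector (a b : ℝ) : Set ℂ :=
  {z ∈ sector a b | normSq z ≤ 1}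

theorem zero_notMem_sector : 0 ∉ sector a b := by
  rintro ⟨r, φ, hr, -, h⟩
  simp [hr.ne'] at h

theorem mul_mem_sector {z : ℂ} {s ψ : ℝ} (hs : 0 < s) (hz : z ∈ sector a b) :
    s * exp (ψ * I) * z ∈ sector (a + ψ) (b + ψ) := by
  obtain ⟨r, φ, hr, ⟨ha, hb⟩, rfl⟩ := hz
  refine ⟨s * r, φ + ψ, mul_pos hs hr, ⟨by gcongr, by gcongr⟩, ?_⟩
  push_cast
  rw [add_mul, Complex.exp_add]
  ring

theorem mul_mem_sector_iff {z : ℂ} {s ψ : ℝ} (hs : 0 < s) :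
    s * exp (ψ * I) * z ∈ sector a b ↔ z ∈ sector (a - ψ) (b - ψ) := by
  refine ⟨fun h ↦ ?_, fun h ↦ by simpa using mul_mem_sector (ψ := ψ) hs h⟩
  rw [sub_eq_add_neg, sub_eq_add_neg]
  convert mul_mem_sector (ψ := -ψ) (inv_pos.2 hs) h using 1
  have hs' : (s : ℂ) ≠ 0 := by exact_mod_cast hs.ne'
  push_cast
  rw [neg_mul, Complex.exp_neg]
  field_simp [Complex.exp_ne_zero]

theorem neg_notMem_sector (hab : b - a ≤ Real.pi) {z : ℂ} (hz : z ∈ sector a b) :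
    -z ∉ sector a b := by
  obtain ⟨r, φ, hr, ⟨hφa, hφb⟩, rfl⟩ := hz
  rintro ⟨s, ψ, hs, ⟨hψa, hψb⟩, h⟩
  have hsub : r * exp ((φ - ψ : ℝ) * I) = (-s : ℝ) := by
    push_cast
    rw [sub_mul, Complex.exp_sub, ← mul_div_assoc, div_eq_iff (Complex.exp_ne_zero _)]
    linear_combination -h
  have him : r * Real.sin (φ - ψ) = 0 := by
    simpa [exp_ofReal_mul_I_im, -ofReal_sub] using congrArg im hsub
  have hφψ : φ - ψ = 0 :=
    (Real.sin_eq_zero_iff_of_lt_of_lt (by linarith) (by linarith)).1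
      ((mul_eq_zero.1 him).resolve_left hr.ne')
  rw [hφψ] at hsub
  have : r = -s := by simpa using congrArg re hsub
  linarith

theorem sector_neg_self {α : ℝ} (hα : α ≤ Real.pi) :
    sector (-α) α = {z | z ≠ 0 ∧ arg z ∈ Set.Ioc (-α) α} := by
  ext z
  constructor
  · rintro ⟨r, φ, hr, hφ, rfl⟩
    refine ⟨by simp [hr.ne'], ?_⟩
    rwa [Complex.exp_mul_I, Complex.arg_mul_cos_add_sin_mul_I hr
      ⟨(neg_le_neg hα).trans_lt hφ.1, hφ.2.trans hα⟩]
  · rintro ⟨hz, hφ⟩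
    exact ⟨‖z‖, arg z, norm_pos_iff.2 hz, hφ, (norm_mul_exp_arg_mul_I z).symm⟩

theorem rotation_preimage_unitSector (ψ : ℝ) :
    rotation (Circle.exp ψ) ⁻¹' unitSector a b = unitSector (a - ψ) (b - ψ) := by
  ext z
  have h := mul_mem_sector_iff (a := a) (b := b) (z := z) (ψ := ψ) one_pos
  rw [ofReal_one, one_mul] at h
  simp [unitSector, h, normSq_eq_norm_sq, norm_exp_ofReal_mul_I]

theorem unitSector_eq_preimage_rotation (a b : ℝ) :
    unitSector a b = rotation (Circle.exp (-((a + b) / 2))) ⁻¹'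
      unitSector (-((b - a) / 2)) ((b - a) / 2) := by
  rw [rotation_preimage_unitSector]
  congr 1 <;> ring

theorem measurableSet_unitSector (hab : b ≤ a + 2 * Real.pi) :
    MeasurableSet (unitSector a b) := by
  rw [unitSector_eq_preimage_rotation]
  refine (rotation _).continuous.measurable ?_
  rw [unitSector, sector_neg_self (by linarith)]
  measurability

theorem isBounded_unitSector : Bornology.IsBounded (unitSector a b) := by
  refine (Metric.isBounded_closedBall (x := 0) (r := 1)).subset fun z hz ↦ ?_
  have := hz.2
  rwa [normSq_eq_norm_sq, sq_le_one_iff₀ (norm_nonneg z), ← mem_closedBall_zero_iff] at this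

theorem volume_line_eq_zero {u : ℂ} (hu : u ≠ 0) : volume {z : ℂ | (u * z).im = 0} = 0 := by
  let f : ℂ →ₗ[ℝ] ℝ := imLm ∘ₗ LinearMap.mulLeft ℝ u
  have hf : LinearMap.ker f ≠ ⊤ := fun h ↦ by
    have : I * u⁻¹ ∈ LinearMap.ker f := h ▸ Submodule.mem_top
    simp [f, mul_left_comm u, hu] at this
  exact Measure.addHaar_submodule volume _ hf

theorem volume_arg_eq_zero (α : ℝ) : volume {z : ℂ | arg z = α} = 0 := by
  refine measure_mono_null (fun z hz ↦ ?_)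
    (volume_line_eq_zero (Complex.exp_ne_zero (-α * I)))
  rw [Set.mem_ofPred_eq] at hz ⊢
  rw [← norm_mul_exp_arg_mul_I z, hz, mul_left_comm, ← Complex.exp_add]
  simp

theorem frontier_sector_neg_self_subset {α : ℝ} (hα : α ≤ Real.pi) :
    frontier (sector (-α) α) ⊆ {0} ∪ arg ⁻¹' {Real.pi, -α, α} := by
  intro z hz
  by_contra hz'
  simp only [Set.mem_union, Set.mem_singleton_iff, Set.mem_preimage, Set.mem_insert_iff,
    not_or] at hz'
  obtain ⟨hz0, hargπ, hlow, hhigh⟩ := hz'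
  have hcont := continuousAt_arg (mem_slitPlane_iff_arg.2 ⟨hargπ, hz0⟩)
  rw [sector_neg_self hα] at hz
  by_cases harg : arg z ∈ Set.Icc (-α) α
  · refine hz.2 (mem_interior_iff_mem_nhds.2 ?_)
    filter_upwards [isOpen_ne.mem_nhds hz0, hcont.preimage_mem_nhds
      (Ioo_mem_nhds (harg.1.lt_of_ne' hlow) (harg.2.lt_of_ne hhigh))] with w hw0 hw
    exact ⟨hw0, Set.Ioo_subset_Ioc_self hw⟩
  · refine mem_closure_iff_frequently.1 hz.1 ?_
    filter_upwards [hcont.preimage_mem_nhds (isClosed_Icc.isOpen_compl.mem_nhds harg)]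
      with w hw hws
    exact hw (Set.Ioc_subset_Icc_self hws.2)

theorem volume_frontier_unitSector (hab : b ≤ a + 2 * Real.pi) :
    volume (frontier (unitSector a b)) = 0 := by
  set α := (b - a) / 2 with hα
  have hball : {z : ℂ | normSq z ≤ 1} = Metric.closedBall 0 1 := by
    ext z
    simp [normSq_eq_norm_sq]
  have hsector : volume (frontier (sector (-α) α)) = 0 := by
    refine measure_mono_null (frontier_sector_neg_self_subset (by linarith))
      (measure_union_null (measure_singleton 0) ?_)
    simp only [Set.insert_eq, Set.preimage_union]
    exact measure_union_null (volume_arg_eq_zero _)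
      (measure_union_null (volume_arg_eq_zero _) (volume_arg_eq_zero _))
  have hsymm : volume (frontier (unitSector (-α) α)) = 0 := by
    have hinter : unitSector (-α) α = sector (-α) α ∩ Metric.closedBall 0 1 := by
      rw [← hball]; rfl
    rw [hinter]
    refine measure_mono_null (frontier_inter_subset _ _) (measure_union_null ?_ ?_)
    · exact measure_mono_null Set.inter_subset_left hsector
    · exact measure_mono_null Set.inter_subset_right
        ((convex_closedBall _ _).addHaar_frontier _)
  rw [unitSector_eq_preimage_rotation, ← hα, ← LinearIsometryEquiv.coe_toHomeomorph,
    ← Homeomorph.preimage_frontier, LinearIsometryEquiv.coe_toHomeomorph,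
    (rotation _).measurePreserving.measure_preimage
      isClosed_frontier.measurableSet.nullMeasurableSet]
  exact hsymm

theorem polarCoord_symm_mem_unitSector_iff {α : ℝ} (hα : α ≤ Real.pi) {p : ℝ × ℝ}
    (hp : p ∈ polarCoord.target) :
    Complex.polarCoord.symm p ∈ unitSector (-α) α ↔ p.1 ≤ 1 ∧ p.2 ∈ Set.Ioc (-α) α := by
  rw [polarCoord_target] at hp
  obtain ⟨hr : 0 < p.1, hφ⟩ := hp
  have hne : Complex.polarCoord.symm p ≠ 0 := by
    rw [← norm_ne_zero_iff, norm_polarCoord_symm, abs_ne_zero]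
    exact hr.ne'
  have harg : arg (Complex.polarCoord.symm p) = p.2 := by
    rw [Complex.polarCoord_symm_apply, ofReal_cos, ofReal_sin,
      arg_mul_cos_add_sin_mul_I hr (Set.Ioo_subset_Ioc_self hφ)]
  rw [unitSector, sector_neg_self hα, Set.mem_sep_iff, normSq_eq_norm_sq, norm_polarCoord_symm,
    sq_abs, sq_le_one_iff₀ hr.le, Set.mem_ofPred_eq, harg]
  tauto

theorem volumeReal_unitSector (hab : a ≤ b) (hba : b ≤ a + 2 * Real.pi) :
    volume.real (unitSector a b) = (b - a) / 2 := by
  set α := (b - a) / 2 with hα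
  have hα0 : 0 ≤ α := by linarith
  have hαπ : α ≤ Real.pi := by linarith
  have hmeas : MeasurableSet (unitSector (-α) α) := measurableSet_unitSector (by linarith)
  have hradial : ∫ r in Set.Ioi (0 : ℝ), (Set.Iic 1).indicator (fun r ↦ r) r = 1 / 2 := by
    rw [setIntegral_indicator measurableSet_Iic, Set.Ioi_inter_Iic,
      ← intervalIntegral.integral_of_le zero_le_one, integral_id]
    norm_num
  have hangular : ∫ φ in Set.Ioo (-Real.pi) Real.pi,
      (Set.Ioc (-α) α).indicator (1 : ℝ → ℝ) φ = 2 * α := by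
    rw [← integral_Ioc_eq_integral_Ioo, setIntegral_indicator measurableSet_Ioc,
      Set.inter_eq_right.2 (Set.Ioc_subset_Ioc (neg_le_neg hαπ) hαπ)]
    simp [two_mul, hα0]
  have hintegrand : ∀ p ∈ polarCoord.target,
      p.1 • (unitSector (-α) α).indicator (1 : ℂ → ℝ) (Complex.polarCoord.symm p) =
        (Set.Iic 1).indicator (fun r ↦ r) p.1 * (Set.Ioc (-α) α).indicator 1 p.2 := by
    intro p hp
    classical
    simp only [Set.indicator_apply, polarCoord_symm_mem_unitSector_iff hαπ hp, Set.mem_Iic,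
      ite_and, Pi.one_apply, smul_eq_mul]
    split_ifs <;> simp
  rw [unitSector_eq_preimage_rotation, ← hα,
    (rotation _).measurePreserving.measureReal_preimage hmeas.nullMeasurableSet,
    ← integral_indicator_one hmeas, ← Complex.integral_comp_polarCoord_symm,
    setIntegral_congr_fun polarCoord.open_target.measurableSet hintegrand,
    polarCoord_target, Measure.volume_eq_prod, setIntegral_prod_mul, hradial, hangular]
  ring

end Sector

section GaussianLattice

/-- The lattice `ℤ[i]` in the complex plane. -/
noncomputable abbrev gaussianLattice : Submodule ℤ ℂ :=
  Submodule.span ℤ (Set.range basisOneI)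

theorem mem_gaussianLattice {z : ℂ} :
    z ∈ gaussianLattice ↔ ∃ w : GaussianInt, (w : ℂ) = z := by
  rw [basisOneI.mem_span_iff_repr_mem ℤ]
  constructor
  · intro h
    obtain ⟨m, hm⟩ := h 0
    obtain ⟨n, hn⟩ := h 1
    refine ⟨⟨m, n⟩, Complex.ext ?_ ?_⟩
    · simpa using hm
    · simpa using hn
  · rintro ⟨w, rfl⟩ i
    fin_cases i
    · exact ⟨w.re, by simp⟩
    · exact ⟨w.im, by simp⟩

theorem covolume_gaussianLattice : ZLattice.covolume gaussianLattice = 1 := by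
  rw [ZLattice.covolume_eq_measure_fundamentalDomain _ _
      (ZSpan.isAddFundamentalDomain basisOneI volume),
    measureReal_congr (ZSpan.fundamentalDomain_ae_parallelepiped basisOneI volume),
    ← toBasis_orthonormalBasisOneI, OrthonormalBasis.coe_toBasis, measureReal_def,
    OrthonormalBasis.volume_parallelepiped, ENNReal.toReal_one]

end GaussianLattice

section SectorDensity

/-- The elements of norm at most `R` of a set of Gaussian integers that lie in a given sector. -/
def sectorPoints (S : Set GaussianInt) (a b R : ℝ) : Set GaussianInt :=
  {w ∈ S | (w : ℂ) ∈ sector a b ∧ (w.norm : ℝ) ≤ R}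

/-- `S` has `c * R * (b - a)` elements of norm at most `R` in the sector `(a, b]`, asymptotically
as `R → ∞`; the constant `c` does not depend on the sector. -/
def HasSectorDensity (S : Set GaussianInt) (c : ℝ) : Prop :=
  ∀ a b : ℝ, a ≤ b → b ≤ a + 2 * Real.pi →
    Tendsto (fun R : ℝ ↦ ((sectorPoints S a b R).ncard : ℝ) / R) atTop (𝓝 (c * (b - a)))

variable {S T : Set GaussianInt} {a b R c d : ℝ}

theorem sectorPoints_subset_box :
    sectorPoints S a b R ⊆ (fun p : ℤ × ℤ ↦ (⟨p.1, p.2⟩ : GaussianInt)) ''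
      (Finset.Icc (-⌊R⌋₊.sqrt : ℤ) ⌊R⌋₊.sqrt ×ˢ Finset.Icc (-⌊R⌋₊.sqrt : ℤ) ⌊R⌋₊.sqrt :
        Finset (ℤ × ℤ)) := by
  rintro w ⟨-, -, hw⟩
  have hnorm : ((w.re.natAbs ^ 2 + w.im.natAbs ^ 2 : ℕ) : ℤ) = w.norm := by
    simp only [Nat.cast_add, Nat.cast_pow, Nat.cast_natAbs, Int.cast_abs, Int.cast_id, sq_abs,
      Zsqrtd.norm_def]
    ring
  have hle : w.re.natAbs ^ 2 + w.im.natAbs ^ 2 ≤ ⌊R⌋₊ := Nat.le_floor (by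
    rwa [← Int.cast_natCast, hnorm])
  have hre : w.re.natAbs ≤ ⌊R⌋₊.sqrt := Nat.le_sqrt'.2 (by lia)
  have him : w.im.natAbs ≤ ⌊R⌋₊.sqrt := Nat.le_sqrt'.2 (by lia)
  refine ⟨(w.re, w.im), ?_, rfl⟩
  simp only [Finset.coe_product, Finset.coe_Icc, Set.mem_prod, Set.mem_Icc]
  lia

theorem finite_sectorPoints : (sectorPoints S a b R).Finite :=
  (Set.toFinite _).subset sectorPoints_subset_box

theorem zero_notMem_sectorPoints : 0 ∉ sectorPoints S a b R :=
  fun h ↦ zero_notMem_sector (by simpa using h.2.1)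

theorem ncard_sectorPoints_le (hR : 0 ≤ R) : ((sectorPoints S a b R).ncard : ℝ) ≤ 9 * R := by
  rcases lt_or_ge R 1 with hR1 | hR1
  · have hempty : sectorPoints S a b R = ∅ := by
      refine Set.eq_empty_of_forall_notMem fun w hw ↦ ?_
      have hnorm : w.norm < 1 := by exact_mod_cast hw.2.2.trans_lt hR1
      have hw0 : w = 0 := GaussianInt.norm_eq_zero.1 (by linarith [GaussianInt.norm_nonneg w])
      exact zero_notMem_sectorPoints (hw0 ▸ hw)
    simpa [hempty] using hR
  · set K := ⌊R⌋₊.sqrt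
    have hK : 1 ≤ K := Nat.le_sqrt.2 (Nat.le_floor (by simpa using hR1))
    have hcard : (sectorPoints S a b R).ncard ≤ (2 * K + 1) ^ 2 := by
      refine (Set.ncard_le_ncard sectorPoints_subset_box (Set.toFinite _)).trans
        ((Set.ncard_image_le (Finset.finite_toSet _)).trans ?_)
      rw [Set.ncard_coe_finset, Finset.card_product, Int.card_Icc]
      apply le_of_eq
      rw [sq]
      congr 1 <;> lia
    calc ((sectorPoints S a b R).ncard : ℝ)
        ≤ (2 * K + 1) ^ 2 := by exact_mod_cast hcard
      _ ≤ 9 * (K ^ 2 : ℕ) := by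
          have : (1 : ℝ) ≤ K := by exact_mod_cast hK
          push_cast
          nlinarith
      _ ≤ 9 * R := by
          gcongr
          exact (Nat.cast_le.2 (Nat.sqrt_le' _)).trans (Nat.floor_le hR)

theorem hasSectorDensity_univ : HasSectorDensity Set.univ (1 / 2) := by
  intro a b hab hba
  have hcount (R : ℝ) : (sectorPoints Set.univ a b R).ncard =
      Nat.card ({z ∈ sector a b | normSq z ≤ R} ∩ gaussianLattice : Set ℂ) := by
    rw [Nat.card_coe_set_eq, ← Set.ncard_image_of_injective _ GaussianInt.toComplex_injective]
    congr 1
    ext z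
    constructor
    · rintro ⟨w, ⟨-, hw, hR⟩, rfl⟩
      exact ⟨⟨hw, by rwa [← GaussianInt.intCast_real_norm]⟩, mem_gaussianLattice.2 ⟨w, rfl⟩⟩
    · rintro ⟨⟨hz, hR⟩, hzL⟩
      obtain ⟨w, rfl⟩ := mem_gaussianLattice.1 hzL
      exact ⟨w, ⟨trivial, hz, by rwa [GaussianInt.intCast_real_norm]⟩, rfl⟩
  simp only [hcount]
  convert ZLattice.covolume.tendsto_card_le_div' gaussianLattice
    (X := sector a b) (F := normSq) ?_ ?_ isBounded_unitSector (measurableSet_unitSector hba)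
    (volume_frontier_unitSector hba) using 2
  · rw [covolume_gaussianLattice, div_one]
    exact (one_div_mul_eq_div _ _).trans (volumeReal_unitSector hab hba).symm
  · rintro z r hz hr
    simpa using mul_mem_sector (ψ := 0) hr hz
  · intro z r _
    simp [normSq_mul, sq]

theorem HasSectorDensity.diff (hS : HasSectorDensity S c) (hT : HasSectorDensity T d)
    (hTS : T ⊆ S) : HasSectorDensity (S \ T) (c - d) := by
  intro a b hab hba
  rw [sub_mul]
  refine ((hS a b hab hba).sub (hT a b hab hba)).congr fun R ↦ ?_
  have hdiff : sectorPoints (S \ T) a b R = sectorPoints S a b R \ sectorPoints T a b R := by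
    ext w
    simp only [sectorPoints, Set.mem_sdiff, Set.mem_ofPred_eq]
    tauto
  have hsub : sectorPoints T a b R ⊆ sectorPoints S a b R := fun w hw ↦ ⟨hTS hw.1, hw.2⟩
  rw [hdiff, Set.cast_ncard_sdiff hsub finite_sectorPoints, sub_div]

theorem hasSectorDensity_empty : HasSectorDensity ∅ 0 := by
  intro a b _ _
  simp [sectorPoints]

theorem ncard_sectorPoints_image_mul {g : GaussianInt} (hg : g ≠ 0) :
    (sectorPoints ((g * ·) '' S) a b R).ncard =
      (sectorPoints S (a - arg g) (b - arg g) (R / g.norm)).ncard := by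
  have hinj : Function.Injective (g * ·) := mul_right_injective₀ hg
  have hnorm : (0 : ℝ) < g.norm := by exact_mod_cast GaussianInt.norm_pos.2 hg
  have hgC : (0 : ℝ) < ‖(g : ℂ)‖ := norm_pos_iff.2 (GaussianInt.toComplex_eq_zero.not.2 hg)
  rw [← Set.ncard_image_of_injective (sectorPoints S _ _ _) hinj]
  congr 1
  ext w
  have hmem (v : GaussianInt) : (((g * v : GaussianInt) : ℂ) ∈ sector a b ∧
      ((g * v).norm : ℝ) ≤ R) ↔ (v : ℂ) ∈ sector (a - arg g) (b - arg g) ∧ v.norm ≤ R / g.norm := by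
    rw [GaussianInt.toComplex_mul, ← norm_mul_exp_arg_mul_I (g : ℂ), mul_mem_sector_iff hgC,
      norm_mul_exp_arg_mul_I, Zsqrtd.norm_mul, Int.cast_mul, le_div_iff₀' hnorm]
  constructor
  · rintro ⟨⟨v, hv, rfl⟩, hw⟩
    exact ⟨v, ⟨hv, (hmem v).1 hw⟩, rfl⟩
  · rintro ⟨v, ⟨hv, hw⟩, rfl⟩
    exact ⟨⟨v, hv, rfl⟩, (hmem v).2 hw⟩

theorem HasSectorDensity.image_mul (hS : HasSectorDensity S c) {g : GaussianInt} (hg : g ≠ 0) :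
    HasSectorDensity ((g * ·) '' S) (c / g.norm) := by
  intro a b hab hba
  have hnorm : (0 : ℝ) < g.norm := by exact_mod_cast GaussianInt.norm_pos.2 hg
  have hlim := ((hS (a - arg g) (b - arg g) (by linarith) (by linarith)).comp
    (tendsto_id.atTop_div_const hnorm)).div_const (g.norm : ℝ)
  convert hlim using 2 with R
  · rw [ncard_sectorPoints_image_mul hg, Function.comp_apply, id, div_div,
      div_mul_cancel₀ _ hnorm.ne']
  · ring

theorem one_add_i_dvd_iff_even_norm {w : GaussianInt} :
    (⟨1, 1⟩ : GaussianInt) ∣ w ↔ Even w.norm := by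
  have hpar : Even w.norm ↔ Even (w.re + w.im) := by
    rw [Zsqrtd.norm_def]
    simp [Int.even_add, parity_simps]
  rw [hpar]
  constructor
  · rintro ⟨v, rfl⟩
    exact ⟨v.re, by simp⟩
  · rintro ⟨k, hk⟩
    exact ⟨⟨k, w.im - k⟩, by ext <;> simp; lia⟩

theorem hasSectorDensity_odd_norm : HasSectorDensity {w | Odd w.norm} (1 / 4) := by
  have hdiff : {w : GaussianInt | Odd w.norm} =
      Set.univ \ ((⟨1, 1⟩ : GaussianInt) * ·) '' Set.univ := by
    ext w
    rw [Set.mem_sdiff, Set.image_univ]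
    simp only [Set.mem_univ, true_and, Set.mem_range, eq_comm (b := w)]
    exact Int.not_even_iff_odd.symm.trans one_add_i_dvd_iff_even_norm.not.symm
  have hnorm : (⟨1, 1⟩ : GaussianInt).norm = 2 := rfl
  rw [hdiff]
  convert hasSectorDensity_univ.diff (hasSectorDensity_univ.image_mul (g := ⟨1, 1⟩) (by decide))
    (Set.subset_univ _) using 1
  norm_num [hnorm]

theorem hasSectorDensity_odd_norm_inter_dvd (d : ℕ) :
    HasSectorDensity {w | Odd w.norm ∧ (d : GaussianInt) ∣ w}
      (if Odd d then 1 / (4 * d ^ 2) else 0) := by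
  have hnorm (v : GaussianInt) : (d * v).norm = d ^ 2 * v.norm := by
    rw [Zsqrtd.norm_mul, Zsqrtd.norm_natCast, sq]
  split_ifs with hd
  · have himage : {w | Odd w.norm ∧ (d : GaussianInt) ∣ w} =
        ((d : GaussianInt) * ·) '' {w | Odd w.norm} := by
      ext w
      constructor
      · rintro ⟨hw, v, rfl⟩
        rw [hnorm, Int.odd_mul] at hw
        exact ⟨v, hw.2, rfl⟩
      · rintro ⟨v, hv : Odd v.norm, rfl⟩
        exact ⟨by rw [hnorm]; exact ((Int.odd_coe_nat d).2 hd).pow.mul hv, dvd_mul_right _ _⟩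
    rw [himage]
    convert hasSectorDensity_odd_norm.image_mul (g := d) (Nat.cast_ne_zero.2 hd.pos.ne') using 1
    rw [Zsqrtd.norm_natCast]
    push_cast
    ring
  · convert hasSectorDensity_empty
    refine Set.eq_empty_of_forall_notMem fun w ⟨hw, v, hv⟩ ↦ hd ?_
    rw [hv, hnorm, Int.odd_mul, Int.odd_pow' two_ne_zero, Int.odd_coe_nat] at hw
    exact hw.1

end SectorDensity

section Moebius

theorem hasSum_moebius_of_dvd {n : ℕ} (hn : n ≠ 0) :
    HasSum (fun d : ℕ ↦ if d ∣ n then (μ d : ℝ) else 0) (if n = 1 then 1 else 0) := by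
  have hdivisors : ∑ d ∈ n.divisors, (if d ∣ n then (μ d : ℝ) else 0) = if n = 1 then 1 else 0 := by
    rw [Finset.sum_congr rfl fun d hd ↦ if_pos (Nat.dvd_of_mem_divisors hd)]
    have h := congrArg (· n) ArithmeticFunction.moebius_mul_coe_zeta
    simp only [ArithmeticFunction.coe_mul_zeta_apply, ArithmeticFunction.one_apply] at h
    exact_mod_cast h
  rw [← hdivisors]
  exact hasSum_sum_of_ne_finset_zero fun d hd ↦ if_neg fun h ↦ hd (Nat.mem_divisors.2 ⟨h, hn⟩)

theorem abs_moebius_mul_le (d : ℕ) {x : ℝ} (hx : 0 ≤ x) : |(μ d : ℝ) * x| ≤ x := by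
  rw [abs_mul, abs_of_nonneg hx]
  refine mul_le_of_le_one_left hx ?_
  exact_mod_cast ArithmeticFunction.abs_moebius_le_one

theorem natCast_dvd_iff_dvd_gcd {d : ℕ} {w : GaussianInt} :
    (d : GaussianInt) ∣ w ↔ d ∣ Int.gcd w.re w.im := by
  rw [Int.dvd_gcd_iff]
  exact Zsqrtd.intCast_dvd d w

theorem hasSum_moebius_mul_ncard_dvd {A : Set GaussianInt} (hA : A.Finite) (h0 : 0 ∉ A) :
    HasSum (fun d : ℕ ↦ (μ d : ℝ) * {w ∈ A | (d : GaussianInt) ∣ w}.ncard)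
      ({w ∈ A | IsCoprime w.re w.im}.ncard) := by
  lift A to Finset GaussianInt using hA
  have hcard (p : GaussianInt → Prop) [DecidablePred p] :
      ({w ∈ (A : Set GaussianInt) | p w}.ncard : ℝ) = ∑ w ∈ A, if p w then 1 else 0 := by
    rw [Finset.sum_boole, ← Set.ncard_coe_finset, Finset.coe_filter]
    rfl
  simp only [hcard, Finset.mul_sum, mul_ite, mul_one, mul_zero, natCast_dvd_iff_dvd_gcd,
    Int.isCoprime_iff_gcd_eq_one]
  refine hasSum_sum fun w hw ↦ hasSum_moebius_of_dvd fun hgcd ↦ h0 ?_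
  obtain ⟨hre, him⟩ := Int.gcd_eq_zero_iff.1 hgcd
  rwa [← show w = 0 from Zsqrtd.ext hre him]

variable {S : Set GaussianInt} {a b R : ℝ}

theorem ncard_sectorPoints_dvd_le (hR : 0 ≤ R) (d : ℕ) :
    ((sectorPoints {w ∈ S | (d : GaussianInt) ∣ w} a b R).ncard : ℝ) ≤ 9 * R * (1 / d ^ 2) := by
  rcases eq_or_ne d 0 with rfl | hd
  · have hempty : sectorPoints {w ∈ S | ((0 : ℕ) : GaussianInt) ∣ w} a b R = ∅ := by
      refine Set.eq_empty_of_forall_notMem fun w hw ↦ ?_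
      have hw0 : w = 0 := by simpa using hw.1.2
      exact zero_notMem_sectorPoints (hw0 ▸ hw)
    rw [hempty, Set.ncard_empty, Nat.cast_zero]
    positivity
  · have hsub : sectorPoints {w ∈ S | (d : GaussianInt) ∣ w} a b R ⊆
        sectorPoints (((d : GaussianInt) * ·) '' Set.univ) a b R := by
      rintro w ⟨⟨_, v, rfl⟩, hw⟩
      exact ⟨⟨v, trivial, rfl⟩, hw⟩
    have hle := Set.ncard_le_ncard hsub finite_sectorPoints
    rw [ncard_sectorPoints_image_mul (Nat.cast_ne_zero.2 hd)] at hle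
    refine (Nat.cast_le.2 hle).trans ((ncard_sectorPoints_le ?_).trans_eq ?_)
    · rw [Zsqrtd.norm_natCast]
      positivity
    · rw [Zsqrtd.norm_natCast]
      push_cast
      ring

theorem HasSectorDensity.isCoprime {c : ℕ → ℝ}
    (hS : ∀ d : ℕ, HasSectorDensity {w ∈ S | (d : GaussianInt) ∣ w} (c d)) :
    HasSectorDensity {w ∈ S | IsCoprime w.re w.im} (∑' d, μ d * c d) := by
  intro a b hab hba
  have hsieve (R : ℝ) : ((sectorPoints {w ∈ S | IsCoprime w.re w.im} a b R).ncard : ℝ) / R =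
      ∑' d : ℕ, μ d * ((sectorPoints {w ∈ S | (d : GaussianInt) ∣ w} a b R).ncard / R) := by
    have hcomm (p : GaussianInt → Prop) :
        sectorPoints {w ∈ S | p w} a b R = {w ∈ sectorPoints S a b R | p w} := by
      ext w
      simp only [sectorPoints, Set.mem_ofPred_eq]
      tauto
    simp only [hcomm]
    rw [← (hasSum_moebius_mul_ncard_dvd finite_sectorPoints
      zero_notMem_sectorPoints).tsum_eq, ← tsum_div_const]
    simp only [mul_div_assoc]
  simp only [hsieve, ← tsum_mul_right, mul_assoc]
  refine tendsto_tsum_of_dominated_convergence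
    ((Real.summable_one_div_nat_pow.2 one_lt_two).mul_left 9)
    (fun d ↦ (hS d a b hab hba).const_mul _) ?_
  filter_upwards [eventually_gt_atTop 0] with R hR d
  refine (abs_moebius_mul_le d (by positivity)).trans ?_
  rw [div_le_iff₀ hR]
  exact (ncard_sectorPoints_dvd_le hR.le d).trans_eq (by ring)

/-- The Gaussian integers of odd norm with coprime coordinates. Up to sign, these are the `w` for
which `w ^ 2 / N w` is a rational point of the circle in lowest terms with odd first numerator. -/
def oddPrimitive : Set GaussianInt :=
  {w | Odd w.norm ∧ IsCoprime w.re w.im}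

/-- The sector density of `oddPrimitive`, as provided by Möbius inversion; only its positivity
matters here. -/
noncomputable def oddPrimitiveDensity : ℝ :=
  ∑' d : ℕ, μ d * if Odd d then 1 / (4 * (d : ℝ) ^ 2) else 0

theorem hasSectorDensity_oddPrimitive : HasSectorDensity oddPrimitive oddPrimitiveDensity :=
  HasSectorDensity.isCoprime (S := {w | Odd w.norm}) hasSectorDensity_odd_norm_inter_dvd

-- The term `d = 1` is `1 / 4`, and the others add up to at most `(ζ(2) - 1) / 4 < 1 / 4`.
theorem oddPrimitiveDensity_pos : 0 < oddPrimitiveDensity := by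
  have hzeta := hasSum_zeta_two.div_const 4
  have hbound (d : ℕ) : ‖(μ d : ℝ) * if Odd d then 1 / (4 * (d : ℝ) ^ 2) else 0‖ ≤
      1 / (d : ℝ) ^ 2 / 4 := by
    refine (abs_moebius_mul_le d (by positivity)).trans ?_
    split_ifs
    · exact le_of_eq (by ring)
    · positivity
  have hsum := hzeta.summable.of_norm_bounded hbound
  have hle := (hsum.add hzeta.summable).le_tsum 1 fun d _ ↦ by
    linarith [(abs_le.1 (hbound d)).1]
  rw [hsum.tsum_add hzeta.summable, hzeta.tsum_eq, ← oddPrimitiveDensity] at hle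
  have hfirst : (μ 1 : ℝ) = 1 := by simp
  rw [hfirst, if_pos odd_one] at hle
  have hpi : Real.pi ^ 2 < 10 := by nlinarith [Real.pi_lt_d2, Real.pi_pos]
  norm_num at hle
  linarith

end Moebius

section RationalPoints

variable {p q : ℚ}

theorem exists_natCast_mul_eq_intCast_iff {h : ℕ} :
    (∃ a : ℤ, (h : ℚ) * p = a) ↔ p.den ∣ h := by
  constructor
  · rintro ⟨a, ha⟩
    rcases eq_or_ne h 0 with rfl | hh
    · exact dvd_zero _
    · have hp : p = Rat.divInt a h := by
        rw [Rat.divInt_eq_div, eq_div_iff (by exact_mod_cast hh), Int.cast_natCast, mul_comm, ha]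
      rw [hp]
      exact_mod_cast Rat.den_dvd a h
  · rintro ⟨k, rfl⟩
    exact ⟨k * p.num, by push_cast; rw [mul_right_comm, Rat.den_mul_eq_num, mul_comm]⟩

theorem den_eq_den_of_sq_add_sq_eq_one (h : p ^ 2 + q ^ 2 = 1) : q.den = p.den := by
  have hsq : q ^ 2 = (1 : ℕ) - p ^ 2 := by push_cast; linarith
  have hden := congrArg Rat.den hsq
  rw [Rat.natCast_sub_den, Rat.den_pow, Rat.den_pow] at hden
  exact Nat.pow_left_injective two_ne_zero hden

theorem height_eq_den (h : p ^ 2 + q ^ 2 = 1) : height p q = p.den := by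
  refine IsLeast.csInf_eq ⟨⟨p.pos, ?_, ?_⟩, fun k ⟨hk, hp, _⟩ ↦ ?_⟩
  · exact exists_natCast_mul_eq_intCast_iff.2 dvd_rfl
  · exact exists_natCast_mul_eq_intCast_iff.2 (den_eq_den_of_sq_add_sq_eq_one h).dvd
  · exact Nat.le_of_dvd hk (exists_natCast_mul_eq_intCast_iff.1 hp)

theorem pythagoreanTriple_num (h : p ^ 2 + q ^ 2 = 1) :
    PythagoreanTriple p.num q.num p.den := by
  have hp : (p.den : ℚ) ≠ 0 := by exact_mod_cast p.den_nz
  have hq := q.num_div_den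
  rw [den_eq_den_of_sq_add_sq_eq_one h] at hq
  rw [← p.num_div_den, ← hq] at h
  field_simp at h
  rw [PythagoreanTriple, ← sq, ← sq, ← sq]
  exact_mod_cast h

theorem gcd_num_num_eq_one (h : p ^ 2 + q ^ 2 = 1) : Int.gcd p.num q.num = 1 := by
  have htriple := (pythagoreanTriple_num h).eq
  obtain ⟨u, v, huv⟩ : IsCoprime (p.num ^ 2) (p.den ^ 2 : ℤ) := by
    refine IsCoprime.pow (Int.isCoprime_iff_gcd_eq_one.2 ?_)
    simpa [Int.gcd] using p.reduced
  rw [← Int.isCoprime_iff_gcd_eq_one, ← IsCoprime.pow_iff two_pos two_pos]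
  exact ⟨u + v, v, by linear_combination huv + v * htriple⟩

theorem odd_num_iff_not_odd_num (h : p ^ 2 + q ^ 2 = 1) : Odd p.num ↔ ¬ Odd q.num := by
  rw [Int.odd_iff, Int.odd_iff]
  rcases (pythagoreanTriple_num h).even_odd_of_coprime (gcd_num_num_eq_one h) with h | h <;> lia

end RationalPoints

section CirclePoint

variable {w : GaussianInt}

/-- The rational point `w ^ 2 / N w` of the unit circle, which is the square of the direction
`w / |w|`. -/
def circlePoint (w : GaussianInt) : ℚ × ℚ :=
  ((w * w).re / w.norm, (w * w).im / w.norm)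

theorem circlePoint_neg (w : GaussianInt) : circlePoint (-w) = circlePoint w := by
  simp only [circlePoint, neg_mul_neg, Zsqrtd.norm_neg]

theorem neg_mem_oddPrimitive (hw : w ∈ oddPrimitive) : -w ∈ oddPrimitive := by
  refine ⟨by simpa only [Zsqrtd.norm_neg] using hw.1, ?_⟩
  rw [Zsqrtd.re_neg, Zsqrtd.im_neg]
  exact hw.2.neg_neg

theorem ne_zero_of_mem_oddPrimitive (hw : w ∈ oddPrimitive) : w ≠ 0 := by
  rintro rfl
  simpa using hw.1

theorem circlePoint_eq_cos_sin_iff (hw : w ≠ 0) {t : ℝ} :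
    ((circlePoint w).1 : ℝ) = Real.cos t ∧ ((circlePoint w).2 : ℝ) = Real.sin t ↔
      (w : ℂ) ^ 2 = w.norm * exp (t * I) := by
  have hnorm : (w.norm : ℝ) ≠ 0 := by exact_mod_cast (GaussianInt.norm_pos.2 hw).ne'
  rw [sq, ← GaussianInt.toComplex_mul, Complex.ext_iff, ← ofReal_intCast, re_ofReal_mul,
    im_ofReal_mul, exp_ofReal_mul_I_re, exp_ofReal_mul_I_im, ← GaussianInt.intCast_re,
    ← GaussianInt.intCast_im]
  simp only [circlePoint]
  push_cast
  rw [div_eq_iff hnorm, div_eq_iff hnorm, mul_comm (Real.cos t), mul_comm (Real.sin t)]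

theorem isCoprime_re_mul_self_norm (hw : w ∈ oddPrimitive) : IsCoprime (w * w).re w.norm := by
  obtain ⟨⟨k, hk⟩, hcop⟩ := hw
  obtain ⟨u, v, huv⟩ := hcop.pow (m := 2) (n := 2)
  have hre : w.norm + (w * w).re = 2 * w.re ^ 2 := by
    rw [Zsqrtd.norm_def, Zsqrtd.re_mul]; ring
  have him : w.norm - (w * w).re = 2 * w.im ^ 2 := by
    rw [Zsqrtd.norm_def, Zsqrtd.re_mul]; ring
  refine ⟨-k * (u - v), 1 - k * (u + v), ?_⟩
  linear_combination hk - k * u * hre - k * v * him - 2 * k * huv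

theorem num_circlePoint_fst (hw : w ∈ oddPrimitive) : (circlePoint w).1.num = (w * w).re :=
  Rat.num_div_eq_of_coprime (GaussianInt.norm_pos.2 (ne_zero_of_mem_oddPrimitive hw))
    (Int.isCoprime_iff_nat_coprime.1 (isCoprime_re_mul_self_norm hw))

theorem den_circlePoint_fst (hw : w ∈ oddPrimitive) : ((circlePoint w).1.den : ℤ) = w.norm :=
  Rat.den_div_eq_of_coprime (GaussianInt.norm_pos.2 (ne_zero_of_mem_oddPrimitive hw))
    (Int.isCoprime_iff_nat_coprime.1 (isCoprime_re_mul_self_norm hw))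

theorem odd_num_circlePoint_fst (hw : w ∈ oddPrimitive) : Odd (circlePoint w).1.num := by
  rw [num_circlePoint_fst hw]
  have hre : (w * w).re = 2 * w.re ^ 2 - w.norm := by
    rw [Zsqrtd.norm_def, Zsqrtd.re_mul]; ring
  rw [hre]
  exact (even_two_mul _).sub_odd hw.1

theorem eq_or_eq_neg_of_circlePoint_eq {v : GaussianInt} (hv : v ∈ oddPrimitive)
    (hw : w ∈ oddPrimitive) (h : circlePoint v = circlePoint w) : v = w ∨ v = -w := by
  have hnorm : v.norm = w.norm := by rw [← den_circlePoint_fst hv, h, den_circlePoint_fst hw]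
  have hnorm0 : (w.norm : ℚ) ≠ 0 := by
    exact_mod_cast (GaussianInt.norm_pos.2 (ne_zero_of_mem_oddPrimitive hw)).ne'
  rw [circlePoint, circlePoint, Prod.mk.injEq, hnorm, div_left_inj' hnorm0,
    div_left_inj' hnorm0, Int.cast_inj, Int.cast_inj] at h
  exact mul_self_eq_mul_self_iff.1 (Zsqrtd.ext h.1 h.2)

theorem exists_circlePoint_eq {pq : ℚ × ℚ} (h : pq.1 ^ 2 + pq.2 ^ 2 = 1) (hp : Odd pq.1.num) :
    ∃ w ∈ oddPrimitive, circlePoint w = pq := by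
  obtain ⟨p, q⟩ := pq
  dsimp only at h hp
  obtain ⟨m, n, hX, hY, hN, hmn, -⟩ :=
    (pythagoreanTriple_num h).coprime_classification' (gcd_num_num_eq_one h)
      (Int.odd_iff.1 hp) (by exact_mod_cast p.pos)
  have hnorm : (⟨m, n⟩ : GaussianInt).norm = p.den := by
    rw [hN, Zsqrtd.norm_def]; ring
  refine ⟨⟨m, n⟩, ⟨?_, Int.isCoprime_iff_gcd_eq_one.2 hmn⟩, ?_⟩
  · have hsum : (p.den : ℤ) = p.num + 2 * n ^ 2 := by rw [hX, hN]; ring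
    rw [hnorm, hsum]
    exact hp.add_even (even_two_mul _)
  · have hre : ((⟨m, n⟩ : GaussianInt) * ⟨m, n⟩).re = p.num := by
      rw [hX, Zsqrtd.re_mul]; ring
    have him : ((⟨m, n⟩ : GaussianInt) * ⟨m, n⟩).im = q.num := by
      rw [hY, Zsqrtd.im_mul]; ring
    rw [circlePoint, hnorm, hre, him, Int.cast_natCast, p.num_div_den,
      ← den_eq_den_of_sq_add_sq_eq_one h, q.num_div_den]

end CirclePoint

section ArcPoints

variable {θ₁ θ₂ : ℝ} {H : ℕ}

/-- The rational points of height at most `H` on the half-open arc of angles in `(θ₁, θ₂]`. -/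
def arcPoints (θ₁ θ₂ : ℝ) (H : ℕ) : Set (ℚ × ℚ) :=
  {pq | (∃ t ∈ Set.Ioc θ₁ θ₂, (pq.1 : ℝ) = Real.cos t ∧ (pq.2 : ℝ) = Real.sin t) ∧
    height pq.1 pq.2 ≤ H}

/-- The points of `arcPoints` whose first coordinate has an odd numerator. -/
def oddArcPoints (θ₁ θ₂ : ℝ) (H : ℕ) : Set (ℚ × ℚ) :=
  {pq ∈ arcPoints θ₁ θ₂ H | Odd pq.1.num}

theorem sq_add_sq_eq_one_of_eq_cos_sin {p q : ℚ} {t : ℝ} (hp : (p : ℝ) = Real.cos t)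
    (hq : (q : ℝ) = Real.sin t) : p ^ 2 + q ^ 2 = 1 := by
  have h := Real.cos_sq_add_sin_sq t
  rw [← hp, ← hq] at h
  exact_mod_cast h

theorem circlePoint_mem_oddArcPoints {w : GaussianInt}
    (hw : w ∈ sectorPoints oddPrimitive (θ₁ / 2) (θ₂ / 2) H) :
    circlePoint w ∈ oddArcPoints θ₁ θ₂ H := by
  obtain ⟨hodd, ⟨r, φ, hr, ⟨hφ₁, hφ₂⟩, hwφ⟩, hH⟩ := hw
  have hnorm : (w.norm : ℝ) = r ^ 2 := by
    rw [GaussianInt.intCast_real_norm, hwφ, normSq_mul, normSq_ofReal, normSq_eq_norm_sq,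
      norm_exp_ofReal_mul_I]
    ring
  obtain ⟨hcos, hsin⟩ :=
    (circlePoint_eq_cos_sin_iff (ne_zero_of_mem_oddPrimitive hodd) (t := 2 * φ)).2 <| by
      rw [hwφ, mul_pow, ← Complex.exp_nat_mul, ← ofReal_intCast, hnorm]
      push_cast
      ring_nf
  refine ⟨⟨⟨2 * φ, ⟨by linarith, by linarith⟩, hcos, hsin⟩, ?_⟩, odd_num_circlePoint_fst hodd⟩
  rw [height_eq_den (sq_add_sq_eq_one_of_eq_cos_sin hcos hsin)]
  rwa [← den_circlePoint_fst hodd, Int.cast_natCast, Nat.cast_le] at hH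

theorem exists_mem_sectorPoints_circlePoint_eq {pq : ℚ × ℚ} (hpq : pq ∈ oddArcPoints θ₁ θ₂ H) :
    ∃ w ∈ sectorPoints oddPrimitive (θ₁ / 2) (θ₂ / 2) H, circlePoint w = pq := by
  obtain ⟨⟨⟨t, ⟨ht₁, ht₂⟩, hcos, hsin⟩, hH⟩, hodd⟩ := hpq
  have hcircle := sq_add_sq_eq_one_of_eq_cos_sin hcos hsin
  obtain ⟨w, hw, rfl⟩ := exists_circlePoint_eq hcircle hodd
  have hw0 := ne_zero_of_mem_oddPrimitive hw
  have hnorm : (0 : ℝ) < w.norm := by exact_mod_cast GaussianInt.norm_pos.2 hw0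
  have hwH : (w.norm : ℝ) ≤ H := by
    rwa [← den_circlePoint_fst hw, Int.cast_natCast, Nat.cast_le, ← height_eq_den hcircle]
  set u : ℂ := √(w.norm : ℝ) * exp ((t / 2 : ℝ) * I) with hu
  have hmem : u ∈ sector (θ₁ / 2) (θ₂ / 2) :=
    ⟨_, t / 2, Real.sqrt_pos.2 hnorm, ⟨by linarith, by linarith⟩, rfl⟩
  have hsq : (w : ℂ) ^ 2 = u ^ 2 := by
    rw [(circlePoint_eq_cos_sin_iff hw0).1 ⟨hcos, hsin⟩, hu, mul_pow, ← Complex.exp_nat_mul,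
      ← ofReal_pow, Real.sq_sqrt hnorm.le]
    push_cast
    ring_nf
  rcases sq_eq_sq_iff_eq_or_eq_neg.1 hsq with h | h
  · exact ⟨w, ⟨hw, h ▸ hmem, hwH⟩, rfl⟩
  · refine ⟨-w, ⟨neg_mem_oddPrimitive hw, ?_, by rwa [Zsqrtd.norm_neg]⟩, circlePoint_neg w⟩
    rwa [GaussianInt.toComplex_neg, h, neg_neg]

theorem bijOn_circlePoint (hθ : θ₂ ≤ θ₁ + 2 * Real.pi) :
    Set.BijOn circlePoint (sectorPoints oddPrimitive (θ₁ / 2) (θ₂ / 2) H)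
      (oddArcPoints θ₁ θ₂ H) := by
  refine ⟨fun w hw ↦ circlePoint_mem_oddArcPoints hw, fun v hv w hw hvw ↦ ?_,
    fun pq hpq ↦ exists_mem_sectorPoints_circlePoint_eq hpq⟩
  refine (eq_or_eq_neg_of_circlePoint_eq hv.1 hw.1 hvw).resolve_right fun hneg ↦ ?_
  refine neg_notMem_sector (by linarith) hw.2.1 ?_
  rw [← GaussianInt.toComplex_neg, ← hneg]
  exact hv.2.1

theorem finite_oddArcPoints (hθ : θ₂ ≤ θ₁ + 2 * Real.pi) : (oddArcPoints θ₁ θ₂ H).Finite :=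
  (bijOn_circlePoint hθ).image_eq ▸ finite_sectorPoints.image _

theorem tendsto_ncard_oddArcPoints_div (hle : θ₁ ≤ θ₂) (hθ : θ₂ ≤ θ₁ + 2 * Real.pi) :
    Tendsto (fun H : ℕ ↦ ((oddArcPoints θ₁ θ₂ H).ncard : ℝ) / H) atTop
      (𝓝 (oddPrimitiveDensity * ((θ₂ - θ₁) / 2))) := by
  rw [sub_div]
  refine ((hasSectorDensity_oddPrimitive (θ₁ / 2) (θ₂ / 2) (by linarith)
    (by linarith [Real.pi_pos])).comp tendsto_natCast_atTop_atTop).congr fun H ↦ ?_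
  rw [Function.comp_apply, (bijOn_circlePoint hθ).ncard_eq]

/-- Rotation of the rational points by a quarter turn. It exchanges the points of the circle whose
first numerator is odd with those whose first numerator is even. -/
def quarterTurn (pq : ℚ × ℚ) : ℚ × ℚ :=
  (-pq.2, pq.1)

theorem quarterTurn_injective : Function.Injective quarterTurn := by
  rintro ⟨p, q⟩ ⟨p', q'⟩ h
  simpa [quarterTurn, and_comm] using h

theorem height_neg_swap (p q : ℚ) : height (-q) p = height p q := by
  have hneg (h : ℕ) : (∃ a : ℤ, (h : ℚ) * -q = a) ↔ ∃ a : ℤ, (h : ℚ) * q = a := by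
    rw [exists_natCast_mul_eq_intCast_iff, exists_natCast_mul_eq_intCast_iff, Rat.neg_den]
  simp only [height, hneg, and_comm]

theorem quarterTurn_mem_arcPoints_iff {pq : ℚ × ℚ} :
    quarterTurn pq ∈ arcPoints θ₁ θ₂ H ↔
      pq ∈ arcPoints (θ₁ - Real.pi / 2) (θ₂ - Real.pi / 2) H := by
  refine and_congr ⟨?_, ?_⟩ (by rw [quarterTurn, height_neg_swap])
  · rintro ⟨t, ⟨ht₁, ht₂⟩, hcos, hsin⟩
    refine ⟨t - Real.pi / 2, ⟨by linarith, by linarith⟩, ?_, ?_⟩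
    · rw [Real.cos_sub_pi_div_two, ← hsin, quarterTurn]
    · rw [Real.sin_sub_pi_div_two, ← hcos, quarterTurn, Rat.cast_neg, neg_neg]
  · rintro ⟨t, ⟨ht₁, ht₂⟩, hcos, hsin⟩
    refine ⟨t + Real.pi / 2, ⟨by linarith, by linarith⟩, ?_, ?_⟩
    · rw [Real.cos_add_pi_div_two, ← hsin, quarterTurn, Rat.cast_neg]
    · rw [Real.sin_add_pi_div_two, ← hcos, quarterTurn]

theorem odd_num_quarterTurn_fst_iff {pq : ℚ × ℚ} (h : pq ∈ arcPoints θ₁ θ₂ H) :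
    Odd (quarterTurn pq).1.num ↔ ¬ Odd pq.1.num := by
  obtain ⟨⟨t, -, hcos, hsin⟩, -⟩ := h
  rw [odd_num_iff_not_odd_num (sq_add_sq_eq_one_of_eq_cos_sin hcos hsin), not_not, quarterTurn,
    Rat.neg_num, odd_neg]

theorem arcPoints_sdiff_oddArcPoints (θ₁ θ₂ : ℝ) (H : ℕ) :
    arcPoints θ₁ θ₂ H \ oddArcPoints θ₁ θ₂ H =
      quarterTurn '' oddArcPoints (θ₁ - Real.pi / 2) (θ₂ - Real.pi / 2) H := by
  ext pq
  constructor
  · rintro ⟨harc, hodd⟩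
    have hturn : quarterTurn (pq.2, -pq.1) = pq := by simp [quarterTurn]
    have hmem := quarterTurn_mem_arcPoints_iff.1 (hturn.symm ▸ harc)
    refine ⟨(pq.2, -pq.1), ⟨hmem, ?_⟩, hturn⟩
    by_contra hx
    exact hodd ⟨harc, hturn ▸ (odd_num_quarterTurn_fst_iff hmem).2 hx⟩
  · rintro ⟨pq, ⟨harc, hodd⟩, rfl⟩
    exact ⟨quarterTurn_mem_arcPoints_iff.2 harc,
      fun h ↦ (odd_num_quarterTurn_fst_iff harc).1 h.2 hodd⟩

theorem finite_arcPoints (hθ : θ₂ ≤ θ₁ + 2 * Real.pi) : (arcPoints θ₁ θ₂ H).Finite := by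
  refine Set.Finite.of_sdiff (t := oddArcPoints θ₁ θ₂ H) ?_ (finite_oddArcPoints hθ)
  rw [arcPoints_sdiff_oddArcPoints]
  exact (finite_oddArcPoints (by linarith)).image _

theorem tendsto_ncard_arcPoints_div (hle : θ₁ ≤ θ₂) (hθ : θ₂ ≤ θ₁ + 2 * Real.pi) :
    Tendsto (fun H : ℕ ↦ ((arcPoints θ₁ θ₂ H).ncard : ℝ) / H) atTop
      (𝓝 (oddPrimitiveDensity * (θ₂ - θ₁))) := by
  have hlim := (tendsto_ncard_oddArcPoints_div hle hθ).add
    (tendsto_ncard_oddArcPoints_div (θ₁ := θ₁ - Real.pi / 2) (θ₂ := θ₂ - Real.pi / 2)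
      (by linarith) (by linarith))
  convert hlim using 2 with H
  · have hsub : oddArcPoints θ₁ θ₂ H ⊆ arcPoints θ₁ θ₂ H := Set.sep_subset _ _
    rw [← Set.ncard_sdiff_add_ncard_of_subset hsub (finite_arcPoints hθ),
      arcPoints_sdiff_oddArcPoints, Set.ncard_image_of_injective _ quarterTurn_injective,
      Nat.cast_add, add_div, add_comm]
  · ring

/-- The rational points of height at most `H` on the closed arc of angles in `[θ₁, θ₂]`. -/
def closedArcPoints (θ₁ θ₂ : ℝ) (H : ℕ) : Set (ℚ × ℚ) :=
  {pq | (∃ t : ℝ, θ₁ ≤ t ∧ t ≤ θ₂ ∧ (pq.1 : ℝ) = Real.cos t ∧ (pq.2 : ℝ) = Real.sin t) ∧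
    height pq.1 pq.2 ≤ H}

theorem arcPoints_subset_closedArcPoints : arcPoints θ₁ θ₂ H ⊆ closedArcPoints θ₁ θ₂ H :=
  fun _ ⟨⟨t, ht, hpq⟩, hH⟩ ↦ ⟨⟨t, ht.1.le, ht.2, hpq⟩, hH⟩

theorem subsingleton_closedArcPoints_sdiff_arcPoints :
    (closedArcPoints θ₁ θ₂ H \ arcPoints θ₁ θ₂ H).Subsingleton := by
  have hend {pq : ℚ × ℚ} (h : pq ∈ closedArcPoints θ₁ θ₂ H \ arcPoints θ₁ θ₂ H) :
      (pq.1 : ℝ) = Real.cos θ₁ ∧ (pq.2 : ℝ) = Real.sin θ₁ := by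
    obtain ⟨⟨⟨t, ht₁, ht₂, hpq⟩, hH⟩, hnot⟩ := h
    rcases ht₁.eq_or_lt with rfl | hlt
    · exact hpq
    · exact absurd ⟨⟨t, ⟨hlt, ht₂⟩, hpq⟩, hH⟩ hnot
  intro x hx y hy
  refine Prod.ext ?_ ?_
  · exact_mod_cast (hend hx).1.trans (hend hy).1.symm
  · exact_mod_cast (hend hx).2.trans (hend hy).2.symm

theorem tendsto_ncard_closedArcPoints_div (hle : θ₁ ≤ θ₂) (hθ : θ₂ ≤ θ₁ + 2 * Real.pi) :
    Tendsto (fun H : ℕ ↦ ((closedArcPoints θ₁ θ₂ H).ncard : ℝ) / H) atTop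
      (𝓝 (oddPrimitiveDensity * (θ₂ - θ₁))) := by
  have hlower := tendsto_ncard_arcPoints_div hle hθ
  have hupper := hlower.add tendsto_one_div_atTop_nhds_zero_nat
  rw [add_zero] at hupper
  have hsdiff (H : ℕ) : (closedArcPoints θ₁ θ₂ H \ arcPoints θ₁ θ₂ H).Subsingleton :=
    subsingleton_closedArcPoints_sdiff_arcPoints
  have hfin (H : ℕ) : (closedArcPoints θ₁ θ₂ H).Finite :=
    .of_sdiff (hsdiff H).finite (finite_arcPoints hθ)
  refine tendsto_of_tendsto_of_tendsto_of_le_of_le hlower hupper (fun H ↦ ?_) fun H ↦ ?_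
  · dsimp only
    gcongr
    exacts [hfin H, arcPoints_subset_closedArcPoints]
  · dsimp only
    rw [← add_div]
    gcongr
    rw [← Set.ncard_sdiff_add_ncard_of_subset arcPoints_subset_closedArcPoints (hfin H), add_comm]
    have hone : (closedArcPoints θ₁ θ₂ H \ arcPoints θ₁ θ₂ H).ncard ≤ 1 :=
      (Set.ncard_le_one (hsdiff H).finite).2 fun x hx y hy ↦ hsdiff H hx hy
    exact_mod_cast Nat.add_le_add_left hone _

theorem setOf_sq_add_sq_eq_one_eq_arcPoints (H : ℕ) :
    {pq : ℚ × ℚ | pq.1 ^ 2 + pq.2 ^ 2 = 1 ∧ height pq.1 pq.2 ≤ H} =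
      arcPoints (-Real.pi) Real.pi H := by
  ext ⟨p, q⟩
  refine and_congr_left' ⟨fun h ↦ ?_, fun ⟨t, _, hcos, hsin⟩ ↦
    sq_add_sq_eq_one_of_eq_cos_sin hcos hsin⟩
  set z : ℂ := ⟨p, q⟩
  have hz : ‖z‖ = 1 := by
    rw [Complex.norm_def, normSq_mk, Real.sqrt_eq_one, ← sq, ← sq]
    exact_mod_cast h
  refine ⟨arg z, arg_mem_Ioc z, ?_, ?_⟩
  · rw [cos_arg (norm_ne_zero_iff.1 (by simp [hz])), hz, div_one]
  · rw [sin_arg, hz, div_one]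

end ArcPoints

/-- **Rational points are equidistributed on the unit circle** : for every arc
`A = {(cos t, sin t) : θ₁ ≤ t ≤ θ₂}` with `0 < θ₂ − θ₁ ≤ 2π`,
`lim_{H→∞} |{(p,q) ∈ A ∩ ℚ² : h(p,q) ≤ H}| / |{(p,q) ∈ S¹ ∩ ℚ² : h(p,q) ≤ H}|
  = (θ₂−θ₁)/(2π) = length(A)/(2π)`. -/
theorem rational_points_equidistributed (θ₁ θ₂ : ℝ)
    (h₁ : 0 < θ₂ - θ₁) (h₂ : θ₂ - θ₁ ≤ 2 * Real.pi) :
    Tendsto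
      (fun H : ℕ =>
        (({pq : ℚ × ℚ |
            (∃ t : ℝ, θ₁ ≤ t ∧ t ≤ θ₂ ∧
              (pq.1 : ℝ) = Real.cos t ∧ (pq.2 : ℝ) = Real.sin t) ∧
            height pq.1 pq.2 ≤ H}.ncard : ℝ) /
          ({pq : ℚ × ℚ | pq.1 ^ 2 + pq.2 ^ 2 = 1 ∧ height pq.1 pq.2 ≤ H}.ncard : ℝ)))
      atTop (nhds ((θ₂ - θ₁) / (2 * Real.pi))) := by
  have harc := tendsto_ncard_closedArcPoints_div (θ₁ := θ₁) (θ₂ := θ₂) (by linarith) (by linarith)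
  have hcircle := tendsto_ncard_arcPoints_div (θ₁ := -Real.pi) (θ₂ := Real.pi)
    (by linarith [Real.pi_pos]) (by linarith)
  have hpos : oddPrimitiveDensity * (Real.pi - -Real.pi) ≠ 0 :=
    mul_ne_zero oddPrimitiveDensity_pos.ne' (by linarith [Real.pi_pos])
  have hratio := harc.div hcircle hpos
  rw [mul_div_mul_left _ _ oddPrimitiveDensity_pos.ne', sub_neg_eq_add, ← two_mul] at hratio
  refine hratio.congr' ?_
  filter_upwards [eventually_ne_atTop 0] with H hH
  rw [setOf_sq_add_sq_eq_one_eq_arcPoints]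
  exact div_div_div_cancel_right₀ (Nat.cast_ne_zero.2 hH) _ _
end

section
/- Let (ℤ^odd)²_prim = {(m,n) ∈ ℤ² : m and n are both odd and gcd(m,n) = 1}. For every continuous function f : ℝ² → ℝ with compact support, lim_{ε→0⁺} Σ_{z∈(ℤ^odd)²_prim} ε² f(εz) = (2/π²) · ∫_{ℝ²} f(x) dx; that is, (ℤ^odd)²_prim has constant density 2/π². -/
open Filter MeasureTheory

/-- `(ℤ^odd)²_prim`: pairs of odd coprime integers. -/
def OddPrim : Set (ℤ × ℤ) :=
  {p | Odd p.1 ∧ Odd p.2 ∧ Int.gcd p.1 p.2 = 1}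

/-!
Möbius inversion over the common divisor `d` of the two coordinates, which has to be odd, turns the
sum over odd coprime pairs into `∑ d, μ(d)` times the sum over the pairs `d • (odd, odd)`. The
latter, multiplied by `ε²`, is `(2d)⁻²` times a Riemann sum of `f` with square cells of side `2dε`,
so it tends to `(2d)⁻² ∫ f`. All these Riemann sums obey one bound, because `0` is not an odd pair:
as soon as `dε` is large compared with the support of `f`, the sum is empty. Hence the limit may be
taken under the sum over `d`, and `∑_{d odd} μ(d) / (2d)² = (4 ζ(2) (1 - 2⁻²))⁻¹ = 2 / π²`.
-/

open Function Module Topology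

section RiemannSum

variable {V ι E : Type*} [NormedAddCommGroup V] [NormedAddCommGroup E] {f : V → E} {C R : ℝ}

theorem norm_apply_le_indicator_closedBall (hC : ∀ x, ‖f x‖ ≤ C)
    (hR : support f ⊆ Metric.closedBall 0 R) {x y : V} {δ : ℝ} (hxy : f y ≠ 0 → ‖y - x‖ ≤ δ) :
    ‖f y‖ ≤ (Metric.closedBall (0 : V) (R + δ)).indicator (fun _ => C) x := by
  by_cases hy : f y = 0
  · rw [hy, norm_zero]
    exact Set.indicator_nonneg (fun _ _ => (norm_nonneg _).trans (hC y)) x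
  · have hx : x ∈ Metric.closedBall (0 : V) (R + δ) := by
      have hyR : ‖y‖ ≤ R := mem_closedBall_zero_iff.mp (hR hy)
      rw [mem_closedBall_zero_iff]
      calc ‖x‖ ≤ ‖y‖ + ‖y - x‖ := norm_le_norm_add_norm_sub _ _
        _ ≤ R + δ := add_le_add hyR (hxy hy)
    rw [Set.indicator_of_mem hx]
    exact hC y

theorem integrable_indicator_closedBall_const [MeasurableSpace V] [BorelSpace V]
    [ProperSpace V] (μ : Measure V) [IsFiniteMeasureOnCompacts μ] (x : V) (r : ℝ) (y : E) :
    Integrable ((Metric.closedBall x r).indicator fun _ => y) μ :=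
  (integrable_indicator_iff measurableSet_closedBall).mpr
    (integrableOn_const (isCompact_closedBall x r).measure_lt_top.ne)

/-- A partition of `V` into measurable cells of volume `c`, indexed by `ι`, together with a point
`pt i` at distance at most `r` from every element of the cell `i`. The partition is encoded by the
map `cell` sending `x` to the index of its cell. -/
structure IsUniformTiling [MeasurableSpace V] [MeasurableSpace ι] (μ : Measure V) (cell : V → ι)
    (pt : ι → V) (c r : ℝ) : Prop where
  measurable_cell : Measurable cell
  measureReal_cell (i : ι) : μ.real (cell ⁻¹' {i}) = c
  norm_pt_cell_sub_le (x : V) : ‖pt (cell x) - x‖ ≤ r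

theorem IsUniformTiling.integral_comp_cell [MeasurableSpace V] [MeasurableSpace ι]
    [MeasurableSingletonClass ι] [Countable ι] {μ : Measure V} {cell : V → ι} {pt : ι → V} {c r : ℝ}
    [NormedSpace ℝ E] [CompleteSpace E] (h : IsUniformTiling μ cell pt c r) {g : ι → E}
    (hg : Integrable (fun x => g (cell x)) μ) :
    ∫ x, g (cell x) ∂μ = c • ∑' i, g i := by
  have hgm : AEStronglyMeasurable g (μ.map cell) :=
    StronglyMeasurable.of_discrete.aestronglyMeasurable
  have hcell := h.measurable_cell.aemeasurable (μ := μ)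
  rw [← integral_map hcell hgm, integral_countable ((integrable_map_measure hgm hcell).mpr hg)]
  simp_rw [map_measureReal_apply h.measurable_cell (measurableSet_singleton _), h.measureReal_cell]
  exact tsum_const_smul'' c

variable [NormedSpace ℝ V]

/-- The Riemann sum of `f` for the tiling with points `pt` and cells of volume `c`, rescaled by
`ε`. -/
noncomputable def riemannSum [NormedSpace ℝ E] (pt : ι → V) (c : ℝ) (f : V → E) (ε : ℝ) : E :=
  (ε ^ finrank ℝ V * c) • ∑' i, f (ε • pt i)

/-- The point attached to the cell of `x` in the tiling rescaled by `ε`. -/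
noncomputable def snap (cell : V → ι) (pt : ι → V) (ε : ℝ) (x : V) : V :=
  ε • pt (cell (ε⁻¹ • x))

namespace IsUniformTiling

variable [MeasurableSpace V] [MeasurableSpace ι] {μ : Measure V} {cell : V → ι} {pt : ι → V}
  {c r : ℝ}

theorem norm_snap_sub_le (h : IsUniformTiling μ cell pt c r) {ε : ℝ} (hε : 0 < ε) (x : V) :
    ‖snap cell pt ε x - x‖ ≤ ε * r :=
  calc ‖snap cell pt ε x - x‖ = ‖ε • (pt (cell (ε⁻¹ • x)) - ε⁻¹ • x)‖ := by
        rw [smul_sub, smul_inv_smul₀ hε.ne', snap]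
    _ ≤ ε * r := by
        rw [norm_smul, Real.norm_of_nonneg hε.le]
        exact mul_le_mul_of_nonneg_left (h.norm_pt_cell_sub_le _) hε.le

theorem tendsto_snap (h : IsUniformTiling μ cell pt c r) (x : V) :
    Tendsto (fun ε => snap cell pt ε x) (𝓝[>] 0) (𝓝 x) := by
  rw [tendsto_iff_norm_sub_tendsto_zero]
  have hbound : Tendsto (fun ε : ℝ => ε * r) (𝓝[>] 0) (𝓝 0) :=
    ((continuous_mul_const r).tendsto' 0 0 (zero_mul r)).mono_left nhdsWithin_le_nhds
  refine squeeze_zero' (.of_forall fun _ => norm_nonneg _) ?_ hbound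
  filter_upwards [self_mem_nhdsWithin] with ε hε using h.norm_snap_sub_le hε x

variable [MeasurableSingletonClass ι] [Countable ι] [BorelSpace V]

theorem aestronglyMeasurable_comp_snap (h : IsUniformTiling μ cell pt c r) (f : V → E) (ε : ℝ) :
    AEStronglyMeasurable (fun x => f (snap cell pt ε x)) μ :=
  ((StronglyMeasurable.of_discrete (f := fun i => f (ε • pt i))).comp_measurable
    (h.measurable_cell.comp (measurable_const_smul ε⁻¹))).aestronglyMeasurable

variable [FiniteDimensional ℝ V] [μ.IsAddHaarMeasure]

theorem integrable_comp_snap (h : IsUniformTiling μ cell pt c r) (hC : ∀ x, ‖f x‖ ≤ C)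
    (hR : support f ⊆ Metric.closedBall 0 R) {ε : ℝ} (hε : 0 < ε) :
    Integrable (fun x => f (snap cell pt ε x)) μ :=
  have : ProperSpace V := FiniteDimensional.proper ℝ V
  (integrable_indicator_closedBall_const μ 0 (R + ε * r) C).mono'
    (h.aestronglyMeasurable_comp_snap f ε)
    (.of_forall fun x => norm_apply_le_indicator_closedBall hC hR fun _ => h.norm_snap_sub_le hε x)

variable [NormedSpace ℝ E] [CompleteSpace E]

theorem integral_comp_snap (h : IsUniformTiling μ cell pt c r) (hC : ∀ x, ‖f x‖ ≤ C)
    (hR : support f ⊆ Metric.closedBall 0 R) {ε : ℝ} (hε : 0 < ε) :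
    ∫ x, f (snap cell pt ε x) ∂μ = riemannSum pt c f ε := by
  have hint : Integrable (fun x => f (ε • pt (cell x))) μ :=
    (integrable_comp_smul_iff μ (fun x => f (ε • pt (cell x))) (inv_ne_zero hε.ne')).mp
      (h.integrable_comp_snap hC hR hε)
  calc ∫ x, f (snap cell pt ε x) ∂μ = ε ^ finrank ℝ V • ∫ x, f (ε • pt (cell x)) ∂μ :=
        Measure.integral_comp_inv_smul_of_nonneg μ (fun x => f (ε • pt (cell x))) hε.le
    _ = riemannSum pt c f ε := by
        rw [h.integral_comp_cell (g := fun i => f (ε • pt i)) hint, smul_smul, riemannSum]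

theorem tendsto_riemannSum (h : IsUniformTiling μ cell pt c r) (hC : ∀ x, ‖f x‖ ≤ C)
    (hR : support f ⊆ Metric.closedBall 0 R) (hf : ∀ᵐ x ∂μ, ContinuousAt f x) :
    Tendsto (riemannSum pt c f) (𝓝[>] 0) (𝓝 (∫ x, f x ∂μ)) := by
  have : ProperSpace V := FiniteDimensional.proper ℝ V
  have hr : 0 ≤ r := (norm_nonneg _).trans (h.norm_pt_cell_sub_le 0)
  have hlim : Tendsto (fun ε => ∫ x, f (snap cell pt ε x) ∂μ) (𝓝[>] 0) (𝓝 (∫ x, f x ∂μ)) := by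
    refine tendsto_integral_filter_of_dominated_convergence _
      (.of_forall (h.aestronglyMeasurable_comp_snap f)) ?_
      (integrable_indicator_closedBall_const μ 0 (R + 1 * r) C) ?_
    · filter_upwards [Ioo_mem_nhdsGT one_pos] with ε hε
      refine .of_forall fun x => norm_apply_le_indicator_closedBall hC hR fun _ => ?_
      exact (h.norm_snap_sub_le hε.1 x).trans (mul_le_mul_of_nonneg_right hε.2.le hr)
    · filter_upwards [hf] with x hx using hx.tendsto.comp (h.tendsto_snap x)
  refine hlim.congr' ?_
  filter_upwards [self_mem_nhdsWithin] with ε hε using h.integral_comp_snap hC hR hε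

theorem exists_norm_riemannSum_le (h : IsUniformTiling μ cell pt c r) {ρ : ℝ} (hρ : 0 < ρ)
    (hpt : ∀ i, ρ ≤ ‖pt i‖) (hC : ∀ x, ‖f x‖ ≤ C) (hR : support f ⊆ Metric.closedBall 0 R) :
    ∃ B, ∀ ε, 0 < ε → ‖riemannSum pt c f ε‖ ≤ B := by
  have : ProperSpace V := FiniteDimensional.proper ℝ V
  have hr : 0 ≤ r := (norm_nonneg _).trans (h.norm_pt_cell_sub_le 0)
  refine ⟨∫ x, (Metric.closedBall (0 : V) (R + R / ρ * r)).indicator (fun _ => C) x ∂μ,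
    fun ε hε => ?_⟩
  rw [← h.integral_comp_snap hC hR hε]
  refine norm_integral_le_of_norm_le
    (integrable_indicator_closedBall_const μ 0 (R + R / ρ * r) C) (.of_forall fun x => ?_)
  refine norm_apply_le_indicator_closedBall hC hR fun hx => (h.norm_snap_sub_le hε x).trans ?_
  have hε_le : ε ≤ R / ρ := by
    rw [le_div_iff₀ hρ]
    calc ε * ρ ≤ ε * ‖pt (cell (ε⁻¹ • x))‖ := mul_le_mul_of_nonneg_left (hpt _) hε.le
      _ = ‖snap cell pt ε x‖ := by rw [snap, norm_smul, Real.norm_of_nonneg hε.le]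
      _ ≤ R := mem_closedBall_zero_iff.mp (hR hx)
  exact mul_le_mul_of_nonneg_right hε_le hr

end IsUniformTiling

end RiemannSum

section Dilations

variable {E : Type*} [NormedAddCommGroup E] [NormedSpace ℝ E] [CompleteSpace E]

theorem tendsto_tsum_smul_natCast_mul {a : ℕ → ℝ} (ha : Summable fun d => ‖a d‖) (ha₀ : a 0 = 0)
    {F : ℝ → E} {B : ℝ} {L : E} (hB : ∀ ε, 0 < ε → ‖F ε‖ ≤ B) (hL : Tendsto F (𝓝[>] 0) (𝓝 L)) :
    Tendsto (fun ε : ℝ => ∑' d, a d • F (d * ε)) (𝓝[>] 0) (𝓝 ((∑' d, a d) • L)) := by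
  rw [← ha.of_norm.tsum_smul_const]
  refine tendsto_tsum_of_dominated_convergence (ha.mul_right B) (fun d => ?_) ?_
  · rcases d.eq_zero_or_pos with rfl | hd
    · simp only [ha₀, zero_smul, tendsto_const_nhds_iff]
    have hmul : Tendsto (fun ε : ℝ => d * ε) (𝓝[>] 0) (𝓝[>] 0) := by
      refine tendsto_nhdsWithin_iff.mpr ⟨?_, ?_⟩
      · exact ((continuous_const_mul (d : ℝ)).tendsto' 0 0 (mul_zero _)).mono_left
          nhdsWithin_le_nhds
      · filter_upwards [self_mem_nhdsWithin] with ε hε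
        exact mul_pos (Nat.cast_pos.mpr hd) (Set.mem_Ioi.mp hε)
    exact (hL.comp hmul).const_smul (a d)
  · filter_upwards [self_mem_nhdsWithin] with ε hε d
    rw [norm_smul]
    rcases d.eq_zero_or_pos with rfl | hd
    · simp only [ha₀, norm_zero, zero_mul, le_refl]
    · exact mul_le_mul_of_nonneg_left (hB _ (mul_pos (Nat.cast_pos.mpr hd) hε)) (norm_nonneg _)

end Dilations

section Moebius

open scoped ArithmeticFunction.Moebius

theorem sum_divisors_moebius (n : ℕ) : ∑ d ∈ n.divisors, μ d = if n = 1 then 1 else 0 := by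
  rw [← ArithmeticFunction.coe_zeta_mul_apply, ArithmeticFunction.coe_zeta_mul_moebius,
    ArithmeticFunction.one_apply]

theorem hasSum_moebius_smul_ite {M : Type*} [AddCommGroup M] [TopologicalSpace M] {n : ℕ}
    (hn : n ≠ 0) (x : M) :
    HasSum (fun d => μ d • if d ∣ n then x else 0) (if n = 1 then x else 0) := by
  have hsum : ∑ d ∈ n.divisors, (μ d • if d ∣ n then x else 0) = if n = 1 then x else 0 := by
    rw [Finset.sum_congr rfl fun d hd => by rw [if_pos (Nat.dvd_of_mem_divisors hd)],
      ← Finset.sum_smul, sum_divisors_moebius, ite_smul, one_smul, zero_smul]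
  rw [← hsum]
  refine hasSum_sum_of_ne_finset_zero fun d hd => ?_
  rw [if_neg fun hdn => hd (Nat.mem_divisors.mpr ⟨hdn, hn⟩), smul_zero]

theorem hasSum_moebius_smul_finsum {ι M : Type*} [AddCommGroup M] [TopologicalSpace M]
    [ContinuousAdd M] {N : ι → ℕ} {g : ι → M} (hg : g.HasFiniteSupport)
    (hN : ∀ i, g i ≠ 0 → N i ≠ 0) :
    HasSum (fun d => μ d • ∑ᶠ i ∈ {i | d ∣ N i}, g i) (∑ᶠ i ∈ {i | N i = 1}, g i) := by
  classical
  simp_rw [finsum_mem_eq_sum_filter g _ hg, Finset.sum_filter, Finset.smul_sum]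
  exact hasSum_sum fun i hi => hasSum_moebius_smul_ite (hN i (hg.mem_toFinset.mp hi)) (g i)

/-- The Möbius function multiplied by the principal Dirichlet character modulo `2`. -/
def oddMoebius (d : ℕ) : ℤ := if Odd d then μ d else 0

theorem abs_oddMoebius_le_one (d : ℕ) : |oddMoebius d| ≤ 1 := by
  unfold oddMoebius
  split_ifs
  · exact ArithmeticFunction.abs_moebius_le_one
  · norm_num

theorem summable_norm_oddMoebius_div_sq :
    Summable fun d : ℕ => ‖(oddMoebius d : ℝ) / (2 * d) ^ 2‖ := by
  refine ((Real.summable_one_div_nat_pow (p := 2)).mpr one_lt_two).of_nonneg_of_le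
    (fun _ => norm_nonneg _) fun d => ?_
  have hμ : |(oddMoebius d : ℝ)| ≤ 1 := mod_cast abs_oddMoebius_le_one d
  rcases d.eq_zero_or_pos with rfl | hd
  · simp
  rw [norm_div, Real.norm_eq_abs, norm_pow, Real.norm_of_nonneg (by positivity)]
  gcongr
  linarith [d.cast_nonneg (α := ℝ)]

theorem trivialCharacter_two_apply (d : ℕ) :
    (1 : DirichletCharacter ℂ 2) d = if Odd d then 1 else 0 := by
  split_ifs with hd
  · exact MulChar.one_apply ((ZMod.isUnit_iff_coprime d 2).mpr hd.coprime_two_right)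
  · refine MulChar.map_nonunit _ fun hunit => hd ?_
    exact Nat.coprime_two_right.mp ((ZMod.isUnit_iff_coprime d 2).mp hunit)

theorem LSeries_trivialCharacter_mul_moebius (N : ℕ) [NeZero N] {s : ℂ} (hs : 1 < s.re) :
    LSeries ((fun n : ℕ => (1 : DirichletCharacter ℂ N) n) * fun n => (μ n : ℂ)) s =
      ((∏ p ∈ N.primeFactors, (1 - (p : ℂ) ^ (-s))) * riemannZeta s)⁻¹ := by
  have hs₁ : s ≠ 1 := fun h => by simp [h] at hs
  rw [← DirichletCharacter.LFunctionTrivChar_eq_mul_riemannZeta hs₁,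
    DirichletCharacter.LFunctionTrivChar, DirichletCharacter.LFunction_eq_LSeries _ hs]
  exact eq_inv_of_mul_eq_one_right (DirichletCharacter.LSeries.mul_mu_eq_one _ hs)

theorem LSeries_trivialCharacter_two_mul_moebius_two :
    LSeries ((fun n : ℕ => (1 : DirichletCharacter ℂ 2) n) * fun n => (μ n : ℂ)) 2 =
      8 / Real.pi ^ 2 := by
  have hcpow : ((2 : ℕ) : ℂ) ^ (-2 : ℂ) = 1 / 4 := by
    rw [Complex.cpow_neg]
    norm_num
  rw [LSeries_trivialCharacter_mul_moebius 2 (by norm_num), Nat.prime_two.primeFactors,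
    Finset.prod_singleton, hcpow, riemannZeta_two]
  field_simp
  norm_num

theorem tsum_oddMoebius_div_sq :
    ∑' d : ℕ, (oddMoebius d : ℝ) / (2 * d) ^ 2 = 2 / Real.pi ^ 2 := by
  have hL : ((∑' d : ℕ, (oddMoebius d : ℝ) / (2 * d) ^ 2 : ℝ) : ℂ) =
      LSeries ((fun n : ℕ => (1 : DirichletCharacter ℂ 2) n) * fun n => (μ n : ℂ)) 2 / 4 := by
    rw [LSeries, ← tsum_div_const, Complex.ofReal_tsum]
    refine tsum_congr fun d => ?_
    rcases eq_or_ne d 0 with rfl | hd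
    · simp
    rw [LSeries.term_of_ne_zero hd, Pi.mul_apply, trivialCharacter_two_apply, oddMoebius]
    split_ifs
    · push_cast [Complex.cpow_ofNat]
      ring
    · simp
  rw [LSeries_trivialCharacter_two_mul_moebius_two] at hL
  have hdiv : (8 / Real.pi ^ 2 / 4 : ℝ) = 2 / Real.pi ^ 2 := by ring
  rw [← hdiv]
  exact_mod_cast hL

end Moebius

section OddPairs

/-- The parametrization of the pairs of odd integers by `ℤ × ℤ`. -/
def oddPair (w : ℤ × ℤ) : ℤ × ℤ := (2 * w.1 + 1, 2 * w.2 + 1)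

/-- The inclusion of `ℤ × ℤ` in the plane. -/
def toPlane (z : ℤ × ℤ) : ℝ × ℝ := (z.1, z.2)

theorem injective_oddPair : Injective oddPair := by
  rintro ⟨a, b⟩ ⟨a', b'⟩ h
  simp only [oddPair, Prod.mk.injEq] at h ⊢
  omega

theorem mem_range_oddPair {z : ℤ × ℤ} : z ∈ Set.range oddPair ↔ Odd z.1 ∧ Odd z.2 := by
  constructor
  · rintro ⟨w, rfl⟩
    exact ⟨⟨w.1, rfl⟩, ⟨w.2, rfl⟩⟩
  · rintro ⟨⟨a, ha⟩, ⟨b, hb⟩⟩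
    exact ⟨(a, b), Prod.ext ha.symm hb.symm⟩

theorem oddPrim_eq_image_oddPair :
    OddPrim = oddPair '' {w | Int.gcd (oddPair w).1 (oddPair w).2 = 1} := by
  ext z
  constructor
  · rintro ⟨h₁, h₂, hgcd⟩
    obtain ⟨w, rfl⟩ := mem_range_oddPair.mpr ⟨h₁, h₂⟩
    exact ⟨w, hgcd, rfl⟩
  · rintro ⟨w, hgcd, rfl⟩
    obtain ⟨h₁, h₂⟩ := mem_range_oddPair.mp ⟨w, rfl⟩
    exact ⟨h₁, h₂, hgcd⟩

theorem image_oddPair_dvd_gcd {d : ℕ} (hd : Odd d) :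
    oddPair '' {w | d ∣ Int.gcd (oddPair w).1 (oddPair w).2} =
      Set.range fun w => (d : ℤ) • oddPair w := by
  have hdz : Odd (d : ℤ) := mod_cast hd
  ext z
  constructor
  · rintro ⟨w, hdvd, rfl⟩
    obtain ⟨a, ha⟩ := (Int.natCast_dvd_natCast.mpr hdvd).trans (Int.gcd_dvd_left ..)
    obtain ⟨b, hb⟩ := (Int.natCast_dvd_natCast.mpr hdvd).trans (Int.gcd_dvd_right ..)
    obtain ⟨h₁, h₂⟩ := mem_range_oddPair.mp ⟨w, rfl⟩
    obtain ⟨v, hv⟩ := mem_range_oddPair (z := (a, b)) |>.mpr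
      ⟨(Int.odd_mul.mp (ha ▸ h₁)).2, (Int.odd_mul.mp (hb ▸ h₂)).2⟩
    refine ⟨v, Prod.ext ?_ ?_⟩
    · simp only [hv, Prod.smul_fst, smul_eq_mul, ha]
    · simp only [hv, Prod.smul_snd, smul_eq_mul, hb]
  · rintro ⟨v, rfl⟩
    obtain ⟨h₁, h₂⟩ := mem_range_oddPair.mp ⟨v, rfl⟩
    obtain ⟨w, hw⟩ := mem_range_oddPair (z := (d : ℤ) • oddPair v) |>.mpr
      ⟨by simpa only [Prod.smul_fst, smul_eq_mul] using hdz.mul h₁,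
        by simpa only [Prod.smul_snd, smul_eq_mul] using hdz.mul h₂⟩
    refine ⟨w, ?_, hw⟩
    simp only [Set.mem_ofPred_eq, hw, Prod.smul_fst, Prod.smul_snd, smul_eq_mul]
    exact Int.dvd_gcd (Dvd.intro _ rfl) (Dvd.intro _ rfl)

theorem gcd_oddPair_odd (w : ℤ × ℤ) : Odd (Int.gcd (oddPair w).1 (oddPair w).2) :=
  (Int.natAbs_odd.mpr (mem_range_oddPair.mp ⟨w, rfl⟩).1).of_dvd_nat (Nat.gcd_dvd_left _ _)

theorem hasSum_oddMoebius_smul_tsum_oddPair {M : Type*} [AddCommGroup M] [TopologicalSpace M]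
    [ContinuousAdd M] {g : ℤ × ℤ → M} (hg : g.HasFiniteSupport) :
    HasSum (fun d => oddMoebius d • ∑' w, g ((d : ℤ) • oddPair w)) (∑ᶠ z ∈ OddPrim, g z) := by
  rw [oddPrim_eq_image_oddPair, finsum_mem_image injective_oddPair.injOn]
  have hsum := hasSum_moebius_smul_finsum (hg.fun_comp_of_injective injective_oddPair)
    (N := fun w => Int.gcd (oddPair w).1 (oddPair w).2) fun w _ => (gcd_oddPair_odd w).pos.ne'
  refine hsum.congr_fun fun d => ?_
  by_cases hd : Odd d
  · have hinj : Injective fun w => (d : ℤ) • oddPair w :=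
      (smul_right_injective _ (Nat.cast_ne_zero.mpr hd.pos.ne')).comp injective_oddPair
    rw [oddMoebius, if_pos hd, tsum_eq_finsum (hg.fun_comp_of_injective hinj),
      ← finsum_mem_range hinj, ← image_oddPair_dvd_gcd hd,
      finsum_mem_image injective_oddPair.injOn]
  · have hempty : {w | d ∣ Int.gcd (oddPair w).1 (oddPair w).2} = ∅ :=
      Set.eq_empty_of_forall_notMem fun w hdvd => hd ((gcd_oddPair_odd w).of_dvd_nat hdvd)
    rw [oddMoebius, if_neg hd, hempty, finsum_mem_empty, zero_smul, smul_zero]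

theorem hasFiniteSupport_comp_smul_toPlane {M : Type*} [Zero M] {f : ℝ × ℝ → M}
    (hf : HasCompactSupport f) {ε : ℝ} (hε : ε ≠ 0) :
    (fun z => f (ε • toPlane z)).HasFiniteSupport := by
  have hemb : IsClosedEmbedding fun z => ε • toPlane z :=
    (Homeomorph.smulOfNeZero ε hε).isClosedEmbedding.comp
      (Int.isClosedEmbedding_coe_real.prodMap Int.isClosedEmbedding_coe_real)
  exact (hf.comp_isClosedEmbedding hemb).isCompact.finite_of_discrete.subset (subset_tsupport _)

theorem abs_two_mul_floor_half_add_one_sub_le (t : ℝ) : |2 * (⌊t / 2⌋ : ℝ) + 1 - t| ≤ 1 := by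
  have h₁ := Int.floor_le (t / 2)
  have h₂ := Int.lt_floor_add_one (t / 2)
  rw [abs_le]
  constructor <;> linarith

theorem isUniformTiling_oddPair :
    IsUniformTiling volume (fun x : ℝ × ℝ => (⌊x.1 / 2⌋, ⌊x.2 / 2⌋)) (toPlane ∘ oddPair) 4 1 where
  measurable_cell := by fun_prop
  measureReal_cell := by
    intro w
    have hcell : (fun x : ℝ × ℝ => (⌊x.1 / 2⌋, ⌊x.2 / 2⌋)) ⁻¹' {w} =
        Set.Ico (2 * w.1 : ℝ) (2 * w.1 + 2) ×ˢ Set.Ico (2 * w.2 : ℝ) (2 * w.2 + 2) := by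
      ext x
      simp only [Set.mem_preimage, Set.mem_singleton_iff, Prod.ext_iff, Int.floor_eq_iff,
        Set.mem_prod, Set.mem_Ico, le_div_iff₀ (two_pos (α := ℝ)), div_lt_iff₀ (two_pos (α := ℝ)),
        mul_comm _ (2 : ℝ), mul_add, mul_one]
    rw [hcell, Measure.volume_eq_prod, measureReal_prod_prod,
      Real.volume_real_Ico_of_le (by linarith), Real.volume_real_Ico_of_le (by linarith)]
    ring
  norm_pt_cell_sub_le x := by
    simpa [toPlane, oddPair, Prod.norm_def] using
      ⟨abs_two_mul_floor_half_add_one_sub_le x.1, abs_two_mul_floor_half_add_one_sub_le x.2⟩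

theorem one_le_norm_toPlane_oddPair (w : ℤ × ℤ) : 1 ≤ ‖toPlane (oddPair w)‖ := by
  have habs : 1 ≤ |(oddPair w).1| := Int.one_le_abs fun h => by simp only [oddPair] at h; omega
  calc (1 : ℝ) ≤ |((oddPair w).1 : ℝ)| := mod_cast habs
    _ ≤ ‖toPlane (oddPair w)‖ := norm_fst_le (toPlane (oddPair w))

theorem finsum_oddPrim_eq_tsum_riemannSum {E : Type*} [NormedAddCommGroup E] [NormedSpace ℝ E]
    {f : ℝ × ℝ → E} (hf : HasCompactSupport f) {ε : ℝ} (hε : ε ≠ 0) :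
    ∑ᶠ z ∈ OddPrim, ε ^ 2 • f (ε • toPlane z) =
      ∑' d : ℕ, ((oddMoebius d : ℝ) / (2 * d) ^ 2) •
        riemannSum (toPlane ∘ oddPair) 4 f (d * ε) := by
  have hfin : (fun z => ε ^ 2 • f (ε • toPlane z)).HasFiniteSupport :=
    (hasFiniteSupport_comp_smul_toPlane hf hε).subset (support_const_smul_subset _ _)
  rw [← (hasSum_oddMoebius_smul_tsum_oddPair hfin).tsum_eq]
  refine tsum_congr fun d => ?_
  rcases eq_or_ne d 0 with rfl | hd
  · simp [oddMoebius]
  have hpoint (w : ℤ × ℤ) : ε • toPlane ((d : ℤ) • oddPair w) = (d * ε) • toPlane (oddPair w) := by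
    ext <;> simp [toPlane] <;> ring
  have hd' : (d : ℝ) ≠ 0 := Nat.cast_ne_zero.mpr hd
  simp only [hpoint, riemannSum, comp_apply, finrank_prod, finrank_self]
  rw [tsum_const_smul'', ← Int.cast_smul_eq_zsmul ℝ, smul_smul, smul_smul]
  congr 1
  field_simp
  ring

end OddPairs

theorem oddPrim_constant_density_general {E : Type*} [NormedAddCommGroup E] [NormedSpace ℝ E]
    [CompleteSpace E] (f : ℝ × ℝ → E) (hf : ∀ᵐ x, ContinuousAt f x) {C : ℝ} (hC : ∀ x, ‖f x‖ ≤ C)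
    (hf' : HasCompactSupport f) :
    Tendsto (fun ε : ℝ => ∑ᶠ z ∈ OddPrim, ε ^ 2 • f (ε * (z.1 : ℝ), ε * (z.2 : ℝ)))
      (𝓝[>] 0) (𝓝 ((2 / Real.pi ^ 2 : ℝ) • ∫ x : ℝ × ℝ, f x)) := by
  obtain ⟨R, hR⟩ := hf'.isCompact.isBounded.subset_closedBall 0
  have hsupp : support f ⊆ Metric.closedBall 0 R := (subset_tsupport f).trans hR
  obtain ⟨B, hB⟩ := isUniformTiling_oddPair.exists_norm_riemannSum_le one_pos
    one_le_norm_toPlane_oddPair hC hsupp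
  have hlim := tendsto_tsum_smul_natCast_mul summable_norm_oddMoebius_div_sq (by simp) hB
    (isUniformTiling_oddPair.tendsto_riemannSum hC hsupp hf)
  rw [tsum_oddMoebius_div_sq] at hlim
  refine hlim.congr' ?_
  filter_upwards [self_mem_nhdsWithin] with ε hε
  exact (finsum_oddPrim_eq_tsum_riemannSum hf' (ne_of_gt hε)).symm

/-- **`(ℤ^odd)²_prim` has constant density `2/π²`** : for every continuous compactly
supported `f : ℝ² → ℝ`,
`lim_{ε→0⁺} Σ_{z ∈ (ℤ^odd)²_prim} ε² f(εz) = (2/π²) ∫_{ℝ²} f(x) dx`. -/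
theorem oddPrim_constant_density (f : ℝ × ℝ → ℝ)
    (hf : Continuous f) (hf' : HasCompactSupport f) :
    Tendsto
      (fun ε : ℝ => ∑ᶠ z ∈ OddPrim, ε ^ 2 * f (ε * (z.1 : ℝ), ε * (z.2 : ℝ)))
      (nhdsWithin 0 (Set.Ioi 0))
      (nhds (2 / Real.pi ^ 2 * ∫ x : ℝ × ℝ, f x)) := by
  obtain ⟨C, hC⟩ := hf.bounded_above_of_compact_support hf'
  exact oddPrim_constant_density_general f (.of_forall fun _ => hf.continuousAt) hC hf'
end
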